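/- Let u : A → A' be a flat ring morphism with A Noetherian, let d ∈ A, and let e ≥ 1 be such that (0 :_A d^e) = (0 :_A d^{e+1}). Then (0 :_{A'} d^e) = (0 :_{A'} d^{e+1}) and (0 :_{A'} d^{e+1}) ∩ d^e A' = 0. -/

import Mathlib

universe u

theorem aux_mem_colon {R : Type*} [CommRing R] (a x : R) :
    x ∈ (⊥ : Ideal R).colon (Ideal.span {a}) ↔ a * x = 0 := by
  rw [Submodule.mem_colon]
  constructor
  · intro h
    have := h a (Ideal.mem_span_singleton_self a)
    rw [Submodule.mem_bot, smul_eq_mul] at this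
    rw [mul_comm, this]
  · intro h p hp
    obtain ⟨c, rfl⟩ := Ideal.mem_span_singleton.1 hp
    rw [Submodule.mem_bot, smul_eq_mul]
    linear_combination c * h

theorem aux_flat {A A' : Type*} [CommRing A] [CommRing A'] [Algebra A A']
    [Module.Flat A A'] (d : A) (e : ℕ)
    (h : ∀ x : A, d ^ (e + 1) * x = 0 → d ^ e * x = 0) (x : A')
    (hx : algebraMap A A' d ^ (e + 1) * x = 0) : algebraMap A A' d ^ e * x = 0 := by
  have h1 : ∑ i : Fin 1, (fun _ : Fin 1 => d ^ (e + 1)) i • (fun _ : Fin 1 => x) i = 0 := by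
    simpa [Algebra.smul_def] using hx
  obtain ⟨k, a, y, hy, ha⟩ :=
    Module.Flat.isTrivialRelation_of_sum_smul_eq_zero (R := A) (M := A')
      (f := fun _ : Fin 1 => d ^ (e + 1)) (x := fun _ : Fin 1 => x) h1
  have hy0 : x = _ := hy 0
  rw [hy0, Finset.mul_sum]
  refine Finset.sum_eq_zero fun j _ => ?_
  have h2 : d ^ e * a 0 j = 0 := h _ (by simpa using ha j)
  rw [Algebra.smul_def, ← mul_assoc, ← map_pow, ← map_mul, h2, map_zero, zero_mul]

/-- **Flat base change of stabilized annihilators.** Let `u : A → A'` be a flat ring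
morphism with `A` Noetherian, `d ∈ A` and `e ≥ 1` with `(0 :_A dᵉ) = (0 :_A dᵉ⁺¹)`. Then
`(0 :_{A'} dᵉ) = (0 :_{A'} dᵉ⁺¹)` and `(0 :_{A'} dᵉ⁺¹) ∩ dᵉA' = 0`. -/
theorem annihilator_stable_flat_base_change
    {A A' : Type u} [CommRing A] [CommRing A'] [IsNoetherianRing A] [Algebra A A']
    (hflat : Module.Flat A A') (d : A) (e : ℕ) (he : 1 ≤ e)
    (hstab : (⊥ : Ideal A).colon (Ideal.span {d ^ e}) =
      (⊥ : Ideal A).colon (Ideal.span {d ^ (e + 1)})) :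
    (⊥ : Ideal A').colon (Ideal.span {algebraMap A A' d ^ e}) =
        (⊥ : Ideal A').colon (Ideal.span {algebraMap A A' d ^ (e + 1)}) ∧
      (⊥ : Ideal A').colon (Ideal.span {algebraMap A A' d ^ (e + 1)}) ⊓
          Ideal.span {algebraMap A A' d ^ e} = ⊥ := by
  have h : ∀ x : A, d ^ (e + 1) * x = 0 → d ^ e * x = 0 := fun x hx => by
    rwa [← aux_mem_colon, hstab, aux_mem_colon]
  have h' := aux_flat (A' := A') d e h
  have key : ∀ (n : ℕ) (y : A'), algebraMap A A' d ^ (e + n) * y = 0 →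
      algebraMap A A' d ^ e * y = 0 := by
    intro n
    induction n with
    | zero => intro y hy; simpa using hy
    | succ n ih =>
      intro y hy
      apply h'
      have := ih (algebraMap A A' d * y) (by rw [← hy]; ring)
      rw [← this]; ring
  constructor
  · ext x
    rw [aux_mem_colon, aux_mem_colon]
    exact ⟨fun hx => by rw [pow_succ']; linear_combination algebraMap A A' d * hx, h' x⟩
  · rw [eq_bot_iff]
    rintro x ⟨hx, hx'⟩
    replace hx := (aux_mem_colon _ _).1 hx
    obtain ⟨y, rfl⟩ := Ideal.mem_span_singleton.1 hx'
    rw [Submodule.mem_bot]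
    exact key (e + 1) y (by rw [← hx]; ring)
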